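/- Let L be a Lie ring (or a Lie algebra over a commutative ring) and let T, V ∈ L satisfy ⁅V, ⁅V, ⁅T, V⁆⁆⁆ = 0. Then ⁅V, ⁅V, ⁅T, ⁅T, ⁅T, V⁆⁆⁆⁆⁆ = −3·⁅⁅T,V⁆, ⁅T, ⁅V, ⁅T,V⁆⁆⁆⁆. -/

import Mathlib

/-!
Since `ad V` is a derivation, `(ad V)²` obeys the second-order Leibniz rule. Moving `(ad V)²` past
`(ad T)²` on `A = ⁅T, V⁆` produces three copies of `-⁅A, ⁅T, ⁅V, A⁆⁆⁆`: two from the cross term of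
the Leibniz rule and one from expanding `-⁅T, ⁅A, ⁅V, A⁆⁆⁆`. The remaining terms
`±⁅⁅V, A⁆, ⁅T, A⁆⁆` cancel, and `⁅V, ⁅V, A⁆⁆ = 0` kills `⁅T, ⁅T, ⁅V, ⁅V, A⁆⁆⁆⁆`.
-/

theorem leibniz_lie_lie {L M : Type*} [LieRing L] [AddCommGroup M] [LieRingModule L M]
    (x y : L) (m : M) :
    ⁅x, ⁅x, ⁅y, m⁆⁆⁆ = ⁅⁅x, ⁅x, y⁆⁆, m⁆ + 2 • ⁅⁅x, y⁆, ⁅x, m⁆⁆ + ⁅y, ⁅x, ⁅x, m⁆⁆⁆ := by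
  rw [leibniz_lie x y m, lie_add, leibniz_lie x ⁅x, y⁆ m, leibniz_lie x y ⁅x, m⁆]
  abel

section LieRing

variable {L : Type*} [LieRing L]

theorem lie_lie_lie_left_comm (x y : L) : ⁅x, ⁅y, ⁅x, y⁆⁆⁆ = ⁅y, ⁅x, ⁅x, y⁆⁆⁆ := by
  rw [leibniz_lie x y ⁅x, y⁆, lie_self, zero_add]

theorem hall_relation_X2_X13_general (T V : L) :
    ⁅V, ⁅V, ⁅T, ⁅T, ⁅T, V⁆⁆⁆⁆⁆ =
      ⁅T, ⁅T, ⁅V, ⁅V, ⁅T, V⁆⁆⁆⁆⁆ - 3 • ⁅⁅T, V⁆, ⁅T, ⁅V, ⁅T, V⁆⁆⁆⁆ := by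
  have hVTA : ⁅V, ⁅T, ⁅T, V⁆⁆⁆ = ⁅T, ⁅V, ⁅T, V⁆⁆⁆ := (lie_lie_lie_left_comm T V).symm
  have hVT : ⁅V, T⁆ = -⁅T, V⁆ := (lie_skew V T).symm
  generalize ⁅T, V⁆ = A at *
  have hVVTA : ⁅V, ⁅V, ⁅T, A⁆⁆⁆ = ⁅T, ⁅V, ⁅V, A⁆⁆⁆ - ⁅A, ⁅V, A⁆⁆ := by
    rw [hVTA, leibniz_lie V T, hVT, neg_lie, neg_add_eq_sub]
  have hTAB : ⁅T, ⁅A, ⁅V, A⁆⁆⁆ = ⁅A, ⁅T, ⁅V, A⁆⁆⁆ - ⁅⁅V, A⁆, ⁅T, A⁆⁆ := by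
    rw [leibniz_lie T A, ← lie_skew ⁅T, A⁆, neg_add_eq_sub]
  calc ⁅V, ⁅V, ⁅T, ⁅T, A⁆⁆⁆⁆
      = -⁅⁅V, A⁆, ⁅T, A⁆⁆ - 2 • ⁅A, ⁅T, ⁅V, A⁆⁆⁆ + ⁅T, ⁅V, ⁅V, ⁅T, A⁆⁆⁆⁆ := by
        rw [leibniz_lie_lie, hVT, hVTA, lie_neg, neg_lie, neg_lie, smul_neg, ← sub_eq_add_neg]
    _ = ⁅T, ⁅T, ⁅V, ⁅V, A⁆⁆⁆⁆ - 3 • ⁅A, ⁅T, ⁅V, A⁆⁆⁆ := by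
        rw [hVVTA, lie_sub, hTAB]
        abel

end LieRing

/-- The relation `[X₂, X₁₃] = -3X₁₇` in the paper's Philip Hall basis with generators
`X₁ = T`, `X₂ = V`: if `⁅V, ⁅V, ⁅T, V⁆⁆⁆ = 0` (as holds for the Lie operators of a
Hamiltonian with kinetic energy quadratic in the momenta), then
`⁅V, ⁅V, ⁅T, ⁅T, ⁅T, V⁆⁆⁆⁆⁆ = -3⁅⁅T,V⁆, ⁅T, ⁅V, ⁅T,V⁆⁆⁆⁆`. -/
theorem hall_relation_X2_X13
    {L : Type*} [LieRing L] (T V : L)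
    (hVVTV : ⁅V, ⁅V, ⁅T, V⁆⁆⁆ = 0) :
    ⁅V, ⁅V, ⁅T, ⁅T, ⁅T, V⁆⁆⁆⁆⁆ = -(3 • ⁅⁅T, V⁆, ⁅T, ⁅V, ⁅T, V⁆⁆⁆⁆) := by
  rw [hall_relation_X2_X13_general, hVVTV, lie_zero, lie_zero, zero_sub]
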